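/- Let q ∈ [2,3], let H₁,…,H_k be m×n complex matrices with H₁*H₁ + ⋯ + H_k*H_k ≤ I_n, and let L be an n×n positive semidefinite matrix. Then the function φ(A₁,…,A_k) = Tr exp_q(L + H₁* log_q(A₁) H₁ + ⋯ + H_k* log_q(A_k) H_k) is jointly convex in tuples (A₁,…,A_k) of m×m positive definite matrices. -/

import Mathlib

open Matrix ComplexOrder

/-- Matrix logarithm of a (positive definite) Hermitian matrix, via functional calculus. -/
noncomputable def mlog {n : ℕ} (A : Matrix (Fin n) (Fin n) ℂ) : Matrix (Fin n) (Fin n) ℂ :=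
  cfc Real.log A

/-- Matrix exponential of a Hermitian matrix, via functional calculus. -/
noncomputable def mexp {n : ℕ} (A : Matrix (Fin n) (Fin n) ℂ) : Matrix (Fin n) (Fin n) ℂ :=
  cfc Real.exp A

/-- Real power of a (positive definite) Hermitian matrix, via functional calculus. -/
noncomputable def mpow {n : ℕ} (A : Matrix (Fin n) (Fin n) ℂ) (p : ℝ) : Matrix (Fin n) (Fin n) ℂ :=
  cfc (fun x : ℝ => x ^ p) A

/-- Deformed logarithm `log_q x = (x^(q-1) - 1)/(q-1)`. -/
noncomputable def logq (q x : ℝ) : ℝ := (x ^ (q - 1) - 1) / (q - 1)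

/-- Deformed exponential `exp_q x = (1 + (q-1)x)^(1/(q-1))`, with `exp_1 = exp`. -/
noncomputable def expq (q x : ℝ) : ℝ :=
  if q = 1 then Real.exp x else (1 + (q - 1) * x) ^ (1 / (q - 1))

/-- Deformed logarithm of a positive definite matrix, via functional calculus. -/
noncomputable def mlogq {n : ℕ} (q : ℝ) (A : Matrix (Fin n) (Fin n) ℂ) :
    Matrix (Fin n) (Fin n) ℂ :=
  cfc (logq q) A

/-- Deformed exponential of a Hermitian matrix, via functional calculus. -/
noncomputable def mexpq {m : ℕ} (q : ℝ) (A : Matrix (Fin m) (Fin m) ℂ) :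
    Matrix (Fin m) (Fin m) ℂ :=
  cfc (expq q) A

/-- Real part of the trace. -/
noncomputable def trRe {n : ℕ} (M : Matrix (Fin n) (Fin n) ℂ) : ℝ := (Matrix.trace M).re

/-- The reduced relative entropy `S_H(A | B) = Tr[A log A - H* A H log B - A + B]`. -/
noncomputable def SH {n : ℕ} (H A B : Matrix (Fin n) (Fin n) ℂ) : ℝ :=
  trRe (A * mlog A - Hᴴ * A * H * mlog B - A + B)

/-- The reduced Tsallis relative entropy
`S_{H,q}(A | B) = Tr[A^(2-q) log_q A - H* A^(2-q) H log_q B - A + B]`. -/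
noncomputable def STq {n : ℕ} (H : Matrix (Fin n) (Fin n) ℂ) (q : ℝ)
    (A B : Matrix (Fin n) (Fin n) ℂ) : ℝ :=
  trRe (mpow A (2 - q) * mlogq q A - Hᴴ * mpow A (2 - q) * H * mlogq q B - A + B)

/-- The multivariate trace functional φ(A₁,…,A_k) = Tr exp_q(L + Σⱼ Hⱼ* log_q(Aⱼ) Hⱼ). -/
noncomputable def phim {m n k : ℕ} (q : ℝ) (H : Fin k → Matrix (Fin m) (Fin n) ℂ)
    (L : Matrix (Fin n) (Fin n) ℂ) (A : Fin k → Matrix (Fin m) (Fin m) ℂ) : ℝ :=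
  trRe (mexpq q (L + ∑ j, (H j)ᴴ * mlogq q (A j) * H j))

namespace Matrix.IsHermitian
variable {m n : Type*} [Fintype m] [DecidableEq m] [Fintype n] [DecidableEq n]
  {A : Matrix m m ℂ} {Z : Matrix n n ℂ}

/-- The entries of `K` with respect to the eigenbases of `A` and `Z`. -/
noncomputable def eigenCoord (hA : A.IsHermitian) (hZ : Z.IsHermitian) (K : Matrix m n ℂ) :
    Matrix m n ℂ :=
  (hA.eigenvectorUnitary : Matrix m m ℂ)ᴴ * K * (hZ.eigenvectorUnitary : Matrix n n ℂ)

theorem cfc_eq_mul (hA : A.IsHermitian) (f : ℝ → ℝ) :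
    cfc f A = (hA.eigenvectorUnitary : Matrix m m ℂ) *
      diagonal (fun i => ((f (hA.eigenvalues i) : ℝ) : ℂ)) *
        (hA.eigenvectorUnitary : Matrix m m ℂ)ᴴ := by
  rw [hA.cfc_eq f]
  rfl

theorem exists_eigenCoord_eq (hA : A.IsHermitian) (hZ : Z.IsHermitian) (K : Matrix m n ℂ) :
    ∃ W, hA.eigenCoord hZ W = K := by
  refine ⟨(hA.eigenvectorUnitary : Matrix m m ℂ) * K * (hZ.eigenvectorUnitary : Matrix n n ℂ)ᴴ, ?_⟩
  have h1 : (hA.eigenvectorUnitary : Matrix m m ℂ)ᴴ * hA.eigenvectorUnitary = 1 :=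
    Unitary.coe_star_mul_self _
  have h2 : (hZ.eigenvectorUnitary : Matrix n n ℂ)ᴴ * hZ.eigenvectorUnitary = 1 :=
    Unitary.coe_star_mul_self _
  simp only [eigenCoord, Matrix.mul_assoc, h2, Matrix.mul_one]
  rw [← Matrix.mul_assoc, h1, Matrix.one_mul]

theorem trace_conjTranspose_mul_cfc (hA : A.IsHermitian) (hZ : Z.IsHermitian)
    (f g : ℝ → ℝ) (W K : Matrix m n ℂ) :
    (trace (Wᴴ * cfc f A * K * cfc g Z)).re =
      ∑ i, ∑ j, f (hA.eigenvalues i) * g (hZ.eigenvalues j) *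
        (star (hA.eigenCoord hZ W i j) * hA.eigenCoord hZ K i j).re := by
  have h : trace (Wᴴ * cfc f A * K * cfc g Z) =
      trace ((hA.eigenCoord hZ W)ᴴ * diagonal (fun i => ((f (hA.eigenvalues i) : ℝ) : ℂ)) *
        hA.eigenCoord hZ K * diagonal (fun i => ((g (hZ.eigenvalues i) : ℝ) : ℂ))) := by
    rw [hA.cfc_eq_mul, hZ.cfc_eq_mul, ← Matrix.mul_assoc, trace_mul_comm]
    simp only [eigenCoord, conjTranspose_mul, conjTranspose_conjTranspose, Matrix.mul_assoc]
  rw [h, Finset.sum_comm, trace, Complex.re_sum]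
  refine Finset.sum_congr rfl fun j _ => ?_
  rw [diag_apply, mul_diagonal, mul_apply, Finset.sum_mul, Complex.re_sum]
  refine Finset.sum_congr rfl fun i _ => ?_
  rw [mul_diagonal, conjTranspose_apply, ← Complex.re_ofReal_mul]
  congr 1
  push_cast
  ring

/-- The quadratic form in the eigenbasis coordinates of `K` whose coefficients are the values of `f`
on pairs of eigenvalues of `A` and `Z`. -/
noncomputable def eigenSum (hA : A.IsHermitian) (hZ : Z.IsHermitian) (K : Matrix m n ℂ)
    (f : ℝ → ℝ → ℝ) : ℝ :=
  ∑ i, ∑ j, f (hA.eigenvalues i) (hZ.eigenvalues j) * Complex.normSq (hA.eigenCoord hZ K i j)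

theorem trace_conjTranspose_mul_cfc_self (hA : A.IsHermitian) (hZ : Z.IsHermitian)
    (f g : ℝ → ℝ) (K : Matrix m n ℂ) :
    (trace (Kᴴ * cfc f A * K * cfc g Z)).re = hA.eigenSum hZ K fun x y => f x * g y := by
  rw [hA.trace_conjTranspose_mul_cfc hZ]
  simp only [eigenSum]
  refine Finset.sum_congr rfl fun i _ => Finset.sum_congr rfl fun j _ => ?_
  congr 1
  simp [Complex.normSq_apply]

theorem eigenSum_mono (hA : A.IsHermitian) (hZ : Z.IsHermitian) (K : Matrix m n ℂ)
    {f g : ℝ → ℝ → ℝ}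
    (h : ∀ i j, f (hA.eigenvalues i) (hZ.eigenvalues j) ≤ g (hA.eigenvalues i) (hZ.eigenvalues j)) :
    hA.eigenSum hZ K f ≤ hA.eigenSum hZ K g :=
  Finset.sum_le_sum fun i _ => Finset.sum_le_sum fun j _ =>
    mul_le_mul_of_nonneg_right (h i j) (Complex.normSq_nonneg _)

theorem eigenSum_congr (hA : A.IsHermitian) (hZ : Z.IsHermitian) (K : Matrix m n ℂ)
    {f g : ℝ → ℝ → ℝ}
    (h : ∀ i j, f (hA.eigenvalues i) (hZ.eigenvalues j) = g (hA.eigenvalues i) (hZ.eigenvalues j)) :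
    hA.eigenSum hZ K f = hA.eigenSum hZ K g :=
  Finset.sum_congr rfl fun i _ => Finset.sum_congr rfl fun j _ => by rw [h i j]

theorem eigenSum_const_mul (hA : A.IsHermitian) (hZ : Z.IsHermitian) (K : Matrix m n ℂ) (c : ℝ)
    (f : ℝ → ℝ → ℝ) :
    hA.eigenSum hZ K (fun x y => c * f x y) = c * hA.eigenSum hZ K f := by
  simp only [eigenSum, Finset.mul_sum, mul_assoc]

theorem eigenSum_add (hA : A.IsHermitian) (hZ : Z.IsHermitian) (K : Matrix m n ℂ)
    (f g : ℝ → ℝ → ℝ) :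
    hA.eigenSum hZ K (fun x y => f x y + g x y) = hA.eigenSum hZ K f + hA.eigenSum hZ K g := by
  simp only [eigenSum, add_mul, Finset.sum_add_distrib]

end Matrix.IsHermitian

namespace Matrix
variable {m n : Type*} [Fintype m] [Fintype n]

/-- The affine minorants of the joint function `(A, Z) ↦ ⟨A K, (α A + β Z)⁻¹ (A K)⟩`, where `A` acts
by left and `Z` by right multiplication. -/
noncomputable def affineMinorant (α β : ℝ) (K W : Matrix m n ℂ) (A : Matrix m m ℂ)
    (Z : Matrix n n ℂ) : ℝ :=
  2 * (trace (Wᴴ * A * K)).re - α * (trace (Wᴴ * A * W)).re - β * (trace (Wᴴ * W * Z)).re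

theorem affineMinorant_convexCombination (α β : ℝ) (K W : Matrix m n ℂ) (A B : Matrix m m ℂ)
    (Y Z : Matrix n n ℂ) (s t : ℝ) :
    affineMinorant α β K W (s • A + t • B) (s • Y + t • Z) =
      s * affineMinorant α β K W A Y + t * affineMinorant α β K W B Z := by
  simp only [affineMinorant, Matrix.mul_add, Matrix.add_mul, Matrix.mul_smul, Matrix.smul_mul,
    trace_add, trace_smul, Complex.add_re, Complex.smul_re, smul_eq_mul]
  ring

variable [DecidableEq m] [DecidableEq n]

theorem affineMinorant_eq_sum {A : Matrix m m ℂ} {Z : Matrix n n ℂ} (hA : A.IsHermitian)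
    (hZ : Z.IsHermitian) (α β : ℝ) (K W : Matrix m n ℂ) :
    affineMinorant α β K W A Z = ∑ i, ∑ j,
      (2 * hA.eigenvalues i * (star (hA.eigenCoord hZ W i j) * hA.eigenCoord hZ K i j).re -
        (α * hA.eigenvalues i + β * hZ.eigenvalues j) *
          Complex.normSq (hA.eigenCoord hZ W i j)) := by
  have hA' : IsSelfAdjoint A := hA
  have hZ' : IsSelfAdjoint Z := hZ
  have h1 := hA.trace_conjTranspose_mul_cfc hZ (fun x => x) (fun _ => 1) W K
  have h2 := hA.trace_conjTranspose_mul_cfc_self hZ (fun x => x) (fun _ => 1) W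
  have h3 := hA.trace_conjTranspose_mul_cfc_self hZ (fun _ => 1) (fun x => x) W
  rw [cfc_id' ℝ A, cfc_const_one ℝ Z, Matrix.mul_one] at h1 h2
  rw [cfc_id' ℝ Z, cfc_const_one ℝ A, Matrix.mul_one] at h3
  rw [affineMinorant, h1, h2, h3]
  simp only [IsHermitian.eigenSum, Finset.mul_sum, ← Finset.sum_sub_distrib]
  refine Finset.sum_congr rfl fun i _ => Finset.sum_congr rfl fun j _ => ?_
  ring

theorem two_mul_re_sub_le (a y : ℝ) (hy : 0 < y) (w k : ℂ) :
    2 * a * (star w * k).re - y * Complex.normSq w ≤ a ^ 2 / y * Complex.normSq k := by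
  rw [div_mul_eq_mul_div, le_div_iff₀ hy]
  simp only [Complex.normSq_apply, Complex.star_def, Complex.mul_re, Complex.conj_re,
    Complex.conj_im]
  nlinarith [sq_nonneg (y * w.re - a * k.re), sq_nonneg (y * w.im - a * k.im)]

theorem affineMinorant_le {A : Matrix m m ℂ} {Z : Matrix n n ℂ} (hA : A.IsHermitian)
    (hZ : Z.IsHermitian) {α β : ℝ} (h : ∀ i j, 0 < α * hA.eigenvalues i + β * hZ.eigenvalues j)
    (K W : Matrix m n ℂ) :
    affineMinorant α β K W A Z ≤ hA.eigenSum hZ K fun x y => x ^ 2 / (α * x + β * y) := by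
  rw [affineMinorant_eq_sum hA hZ]
  exact Finset.sum_le_sum fun i _ => Finset.sum_le_sum fun j _ => two_mul_re_sub_le _ _ (h i j) _ _

theorem exists_affineMinorant_eq {A : Matrix m m ℂ} {Z : Matrix n n ℂ} (hA : A.IsHermitian)
    (hZ : Z.IsHermitian) {α β : ℝ} (h : ∀ i j, 0 < α * hA.eigenvalues i + β * hZ.eigenvalues j)
    (K : Matrix m n ℂ) :
    ∃ W, affineMinorant α β K W A Z = hA.eigenSum hZ K fun x y => x ^ 2 / (α * x + β * y) := by
  obtain ⟨W, hW⟩ := hA.exists_eigenCoord_eq hZ (Matrix.of fun i j =>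
    ((hA.eigenvalues i / (α * hA.eigenvalues i + β * hZ.eigenvalues j) : ℝ) : ℂ) *
      hA.eigenCoord hZ K i j)
  refine ⟨W, ?_⟩
  rw [affineMinorant_eq_sum hA hZ, hW]
  refine Finset.sum_congr rfl fun i _ => Finset.sum_congr rfl fun j _ => ?_
  have := (h i j).ne'
  simp only [of_apply]
  generalize hA.eigenvalues i = a at *
  generalize hy : α * a + β * hZ.eigenvalues j = y at *
  simp only [map_mul, Complex.normSq_ofReal, star_mul', Complex.star_def,
    Complex.conj_ofReal, mul_assoc, Complex.re_ofReal_mul, ← Complex.normSq_eq_conj_mul_self,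
    Complex.ofReal_re]
  field_simp
  ring

/-- Joint convexity of `(A, Z) ↦ ⟨A K, (α A + β Z)⁻¹ (A K)⟩`. -/
theorem eigenSum_sq_div_convex {A B : Matrix m m ℂ} {Y Z : Matrix n n ℂ} (hA : A.PosDef)
    (hB : B.PosDef) (hY : Y.PosDef) (hZ : Z.PosDef) {α β s t : ℝ}
    (hαβ : ∀ x y : ℝ, 0 < x → 0 < y → 0 < α * x + β * y) (hs : 0 ≤ s) (ht : 0 ≤ t)
    (hAB : (s • A + t • B).PosDef) (hYZ : (s • Y + t • Z).PosDef) (K : Matrix m n ℂ) :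
    hAB.1.eigenSum hYZ.1 K (fun x y => x ^ 2 / (α * x + β * y)) ≤
      s * hA.1.eigenSum hY.1 K (fun x y => x ^ 2 / (α * x + β * y)) +
        t * hB.1.eigenSum hZ.1 K (fun x y => x ^ 2 / (α * x + β * y)) := by
  obtain ⟨W, hW⟩ := exists_affineMinorant_eq hAB.1 hYZ.1
    (fun i j => hαβ _ _ (hAB.eigenvalues_pos i) (hYZ.eigenvalues_pos j)) K
  rw [← hW, affineMinorant_convexCombination]
  gcongr
  · exact affineMinorant_le hA.1 hY.1
      (fun i j => hαβ _ _ (hA.eigenvalues_pos i) (hY.eigenvalues_pos j)) K W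
  · exact affineMinorant_le hB.1 hZ.1
      (fun i j => hαβ _ _ (hB.eigenvalues_pos i) (hZ.eigenvalues_pos j)) K W

theorem eigenSum_eq_integral {A : Matrix m m ℂ} {Z : Matrix n n ℂ} (hA : A.IsHermitian)
    (hZ : Z.IsHermitian) (K : Matrix m n ℂ) {μ : MeasureTheory.Measure ℝ} {f : ℝ → ℝ → ℝ}
    {g : ℝ → ℝ → ℝ → ℝ}
    (h : ∀ i j, MeasureTheory.Integrable
      (fun r => g r (hA.eigenvalues i) (hZ.eigenvalues j)) μ ∧
        f (hA.eigenvalues i) (hZ.eigenvalues j) =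
          ∫ r, g r (hA.eigenvalues i) (hZ.eigenvalues j) ∂μ) :
    MeasureTheory.Integrable (fun r => hA.eigenSum hZ K (g r)) μ ∧
      hA.eigenSum hZ K f = ∫ r, hA.eigenSum hZ K (g r) ∂μ := by
  simp only [IsHermitian.eigenSum]
  refine ⟨MeasureTheory.integrable_finsetSum _ fun i _ => MeasureTheory.integrable_finsetSum _
    fun j _ => (h i j).1.mul_const _, ?_⟩
  rw [MeasureTheory.integral_finsetSum _ fun i _ => MeasureTheory.integrable_finsetSum _
    fun j _ => (h i j).1.mul_const _]
  refine Finset.sum_congr rfl fun i _ => ?_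
  rw [MeasureTheory.integral_finsetSum _ fun j _ => (h i j).1.mul_const _]
  refine Finset.sum_congr rfl fun j _ => ?_
  rw [MeasureTheory.integral_mul_const, (h i j).2]

/-- Ando's joint convexity of `(A, Z) ↦ Tr Kᴴ A ^ p K Z ^ (1 - p)` for `1 ≤ p ≤ 2`. -/
theorem eigenSum_rpow_convex {A B : Matrix m m ℂ} {Y Z : Matrix n n ℂ} (hA : A.PosDef)
    (hB : B.PosDef) (hY : Y.PosDef) (hZ : Z.PosDef) {p s t : ℝ} (hp : p ∈ Set.Icc (1 : ℝ) 2)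
    (hs : 0 ≤ s) (ht : 0 ≤ t)
    (hAB : (s • A + t • B).PosDef) (hYZ : (s • Y + t • Z).PosDef) (K : Matrix m n ℂ) :
    hAB.1.eigenSum hYZ.1 K (fun x y => x ^ p * y ^ (1 - p)) ≤
      s * hA.1.eigenSum hY.1 K (fun x y => x ^ p * y ^ (1 - p)) +
        t * hB.1.eigenSum hZ.1 K (fun x y => x ^ p * y ^ (1 - p)) := by
  have transfer : ∀ {α β : ℝ}, (∀ x y : ℝ, 0 < x → 0 < y → 0 < α * x + β * y) →
      (∀ x y : ℝ, 0 < x → 0 < y → x ^ p * y ^ (1 - p) = x ^ 2 / (α * x + β * y)) →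
      hAB.1.eigenSum hYZ.1 K (fun x y => x ^ p * y ^ (1 - p)) ≤
        s * hA.1.eigenSum hY.1 K (fun x y => x ^ p * y ^ (1 - p)) +
          t * hB.1.eigenSum hZ.1 K (fun x y => x ^ p * y ^ (1 - p)) := by
    intro α β hpos heq
    have congr : ∀ {A : Matrix m m ℂ} {Z : Matrix n n ℂ} (hA : A.PosDef) (hZ : Z.PosDef),
        hA.1.eigenSum hZ.1 K (fun x y => x ^ p * y ^ (1 - p)) =
          hA.1.eigenSum hZ.1 K (fun x y => x ^ 2 / (α * x + β * y)) := fun hA hZ =>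
      hA.1.eigenSum_congr hZ.1 K fun i j =>
        heq _ _ (hA.eigenvalues_pos i) (hZ.eigenvalues_pos j)
    rw [congr hAB hYZ, congr hA hY, congr hB hZ]
    exact eigenSum_sq_div_convex hA hB hY hZ hpos hs ht hAB hYZ K
  rcases hp.1.eq_or_lt with rfl | hp1
  · refine transfer (α := 1) (β := 0) (fun x y hx hy => by linarith) fun x y hx hy => ?_
    simp
    field_simp
  rcases hp.2.eq_or_lt with rfl | hp2
  · refine transfer (α := 0) (β := 1) (fun x y hx hy => by linarith) fun x y hx hy => ?_
    norm_num [Real.rpow_neg_one, div_eq_mul_inv]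
  obtain ⟨μ, hμ⟩ := Real.exists_measure_rpow_eq_integral_rpowIntegrand₁₂ ⟨hp1, hp2⟩
  have rep : ∀ x y : ℝ, 0 < x → 0 < y →
      MeasureTheory.Integrable (fun r => r ^ (p - 2) * (x ^ 2 / (1 * x + r * y)))
        (μ.restrict (Set.Ioi 0)) ∧
      x ^ p * y ^ (1 - p) =
        ∫ r, r ^ (p - 2) * (x ^ 2 / (1 * x + r * y)) ∂(μ.restrict (Set.Ioi 0)) := by
    intro x y hx hy
    obtain ⟨h1, h2⟩ := hμ (x / y) (Set.mem_Ici.2 (by positivity))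
    have heq : Set.EqOn (fun r => y * Real.rpowIntegrand₁₂ p r (x / y))
        (fun r => r ^ (p - 2) * (x ^ 2 / (1 * x + r * y))) (Set.Ioi 0) := by
      intro r hr
      have hr : 0 < r := hr
      have : p - 1 - 1 = p - 2 := by ring
      simp only
      rw [Real.rpowIntegrand₁₂_eq_mul_rpowIntegrand₀₁ (by positivity) hr,
        Real.rpowIntegrand₀₁_eq_pow_div ⟨by linarith, by linarith⟩ hr.le (by positivity), this]
      field_simp
      ring
    refine ⟨(h1.const_mul y).congr ((MeasureTheory.ae_restrict_mem measurableSet_Ioi).mono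
      fun r hr => heq hr), ?_⟩
    rw [← MeasureTheory.setIntegral_congr_fun measurableSet_Ioi heq,
      MeasureTheory.integral_const_mul, ← h2, Real.div_rpow hx.le hy.le, Real.rpow_sub hy,
      Real.rpow_one]
    ring
  obtain ⟨i₀, e⟩ := eigenSum_eq_integral hAB.1 hYZ.1 K
    (f := fun x y => x ^ p * y ^ (1 - p))
    (g := fun r x y => r ^ (p - 2) * (x ^ 2 / (1 * x + r * y)))
    fun i j => rep _ _ (hAB.eigenvalues_pos i) (hYZ.eigenvalues_pos j)
  obtain ⟨i₁, e₁⟩ := eigenSum_eq_integral hA.1 hY.1 K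
    (f := fun x y => x ^ p * y ^ (1 - p))
    (g := fun r x y => r ^ (p - 2) * (x ^ 2 / (1 * x + r * y)))
    fun i j => rep _ _ (hA.eigenvalues_pos i) (hY.eigenvalues_pos j)
  obtain ⟨i₂, e₂⟩ := eigenSum_eq_integral hB.1 hZ.1 K
    (f := fun x y => x ^ p * y ^ (1 - p))
    (g := fun r x y => r ^ (p - 2) * (x ^ 2 / (1 * x + r * y)))
    fun i j => rep _ _ (hB.eigenvalues_pos i) (hZ.eigenvalues_pos j)
  rw [e, e₁, e₂, ← MeasureTheory.integral_const_mul, ← MeasureTheory.integral_const_mul,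
    ← MeasureTheory.integral_add (i₁.const_mul s) (i₂.const_mul t)]
  refine MeasureTheory.setIntegral_mono_on i₀ ((i₁.const_mul s).add (i₂.const_mul t))
    measurableSet_Ioi fun r hr => ?_
  have hr : 0 < r := hr
  have key := mul_le_mul_of_nonneg_left (eigenSum_sq_div_convex hA hB hY hZ (α := 1) (β := r)
    (fun x y hx hy => by positivity) hs ht hAB hYZ K) (Real.rpow_nonneg hr.le (p - 2))
  simp only [IsHermitian.eigenSum_const_mul]
  linarith

end Matrix

section TracePowers

variable {m n : ℕ}

theorem trRe_cfc {X : Matrix (Fin n) (Fin n) ℂ} (hX : X.IsHermitian) (f : ℝ → ℝ) :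
    trRe (cfc f X) = ∑ i, f (hX.eigenvalues i) := by
  rw [trRe, hX.cfc_eq_mul, trace_mul_comm, ← Matrix.mul_assoc]
  have h : (hX.eigenvectorUnitary : Matrix (Fin n) (Fin n) ℂ)ᴴ * hX.eigenvectorUnitary = 1 :=
    Unitary.coe_star_mul_self _
  rw [h, Matrix.one_mul, trace_diagonal, Complex.re_sum]
  simp

theorem trRe_add (X Y : Matrix (Fin n) (Fin n) ℂ) : trRe (X + Y) = trRe X + trRe Y := by
  simp [trRe]

theorem trRe_smul (c : ℝ) (X : Matrix (Fin n) (Fin n) ℂ) : trRe (c • X) = c * trRe X := by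
  simp [trRe]

theorem trRe_sum {ι : Type*} (s : Finset ι) (X : ι → Matrix (Fin n) (Fin n) ℂ) :
    trRe (∑ j ∈ s, X j) = ∑ j ∈ s, trRe (X j) := by
  simp [trRe, trace_sum]

theorem continuousOn_spectrum (f : ℝ → ℝ) (X : Matrix (Fin n) (Fin n) ℂ) :
    ContinuousOn f (spectrum ℝ X) :=
  X.finite_real_spectrum.continuousOn f

theorem nonneg_of_mem_spectrum {X : Matrix (Fin n) (Fin n) ℂ} (hX : X.PosSemidef) {x : ℝ}
    (hx : x ∈ spectrum ℝ X) : 0 ≤ x := by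
  obtain ⟨i, rfl⟩ := hX.1.spectrum_real_eq_range_eigenvalues ▸ hx
  exact hX.eigenvalues_nonneg i

theorem posSemidef_cfc {X : Matrix (Fin n) (Fin n) ℂ} {f : ℝ → ℝ}
    (hf : ∀ x ∈ spectrum ℝ X, 0 ≤ f x) : (cfc f X).PosSemidef := by
  open scoped MatrixOrder in
  exact Matrix.nonneg_iff_posSemidef.1 (cfc_nonneg hf)

/-- Ando's joint convexity theorem for `(A, Z) ↦ Tr Kᴴ A ^ p K Z ^ (1 - p)` with `1 ≤ p ≤ 2`. -/
theorem trRe_conjTranspose_mul_mpow_convex {A B : Matrix (Fin m) (Fin m) ℂ}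
    {Y Z : Matrix (Fin n) (Fin n) ℂ} (hA : A.PosDef) (hB : B.PosDef) (hY : Y.PosDef)
    (hZ : Z.PosDef) {p s t : ℝ} (hp : p ∈ Set.Icc (1 : ℝ) 2) (hs : 0 ≤ s) (ht : 0 ≤ t)
    (hAB : (s • A + t • B).PosDef) (hYZ : (s • Y + t • Z).PosDef) (K : Matrix (Fin m) (Fin n) ℂ) :
    trRe (Kᴴ * mpow (s • A + t • B) p * K * mpow (s • Y + t • Z) (1 - p)) ≤
      s * trRe (Kᴴ * mpow A p * K * mpow Y (1 - p)) +
        t * trRe (Kᴴ * mpow B p * K * mpow Z (1 - p)) := by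
  simp only [trRe, mpow]
  rw [hAB.1.trace_conjTranspose_mul_cfc_self hYZ.1, hA.1.trace_conjTranspose_mul_cfc_self hY.1,
    hB.1.trace_conjTranspose_mul_cfc_self hZ.1]
  exact eigenSum_rpow_convex hA hB hY hZ hp hs ht hAB hYZ K

theorem rpow_one_div_le {p x z : ℝ} (hp : 1 ≤ p) (hx : 0 ≤ x) (hz : 0 < z) :
    x ^ (1 / p) ≤ 1 / p * (x * z ^ (1 - p)) + (1 - 1 / p) * z := by
  have hp0 : 0 < p := by linarith
  have h := Real.geom_mean_le_arith_mean2_weighted (w₁ := 1 / p) (w₂ := 1 - 1 / p)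
    (by positivity) (by rw [sub_nonneg, div_le_one hp0]; exact hp)
    (mul_nonneg hx (Real.rpow_nonneg hz.le (1 - p))) hz.le (by ring)
  refine le_of_eq_of_le ?_ h
  rw [Real.mul_rpow hx (Real.rpow_nonneg hz.le _), ← Real.rpow_mul hz.le, mul_assoc,
    ← Real.rpow_add hz]
  have : (1 - p) * (1 / p) + (1 - 1 / p) = 0 := by field_simp; ring
  rw [this, Real.rpow_zero, mul_one]

theorem trRe_mpow_one_div_le {p : ℝ} (hp : 1 ≤ p) {X Z : Matrix (Fin n) (Fin n) ℂ}
    (hX : X.PosSemidef) (hZ : Z.PosDef) :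
    trRe (mpow X (1 / p)) ≤ 1 / p * trRe (X * mpow Z (1 - p)) + (1 - 1 / p) * trRe Z := by
  have hX' : IsSelfAdjoint X := hX.1
  have hZ' : IsSelfAdjoint Z := hZ.1
  have h1 := hX.1.trace_conjTranspose_mul_cfc_self hZ.1 (fun x => x ^ (1 / p)) (fun _ => 1) 1
  have h2 := hX.1.trace_conjTranspose_mul_cfc_self hZ.1 (fun x => x) (fun z => z ^ (1 - p)) 1
  have h3 := hX.1.trace_conjTranspose_mul_cfc_self hZ.1 (fun _ => 1) (fun z => z) 1
  rw [cfc_const_one ℝ Z] at h1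
  rw [cfc_id' ℝ X] at h2
  rw [cfc_id' ℝ Z, cfc_const_one ℝ X] at h3
  simp only [conjTranspose_one, Matrix.one_mul, Matrix.mul_one] at h1 h2 h3
  simp only [trRe, mpow]
  rw [h1, h2, h3, ← IsHermitian.eigenSum_const_mul, ← IsHermitian.eigenSum_const_mul,
    ← IsHermitian.eigenSum_add]
  refine IsHermitian.eigenSum_mono _ _ _ fun i j => ?_
  simpa using rpow_one_div_le hp (hX.eigenvalues_nonneg i) (hZ.eigenvalues_pos j)

theorem exists_trRe_mpow_le {p ε : ℝ} (hp : 1 ≤ p) (hε : 0 < ε) {X : Matrix (Fin n) (Fin n) ℂ}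
    (hX : X.PosSemidef) :
    ∃ Z : Matrix (Fin n) (Fin n) ℂ, Z.PosDef ∧
      1 / p * trRe (X * mpow Z (1 - p)) + (1 - 1 / p) * trRe Z ≤
        trRe (mpow X (1 / p)) + n * ε := by
  have hX' : IsSelfAdjoint X := hX.1
  have hp0 : 0 < p := by linarith
  have hp1 : 1 / p ≤ 1 := by rw [div_le_one hp0]; exact hp
  refine ⟨cfc (fun x : ℝ => x ^ (1 / p) + ε) X, ?_, ?_⟩
  · rw [cfc_add_const ε (fun x : ℝ => x ^ (1 / p)) X (continuousOn_spectrum _ _) hX']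
    refine PosDef.posSemidef_add (posSemidef_cfc fun x hx => Real.rpow_nonneg
      (nonneg_of_mem_spectrum hX hx) _) ?_
    rw [Algebra.algebraMap_eq_smul_one]
    exact PosDef.one.smul hε
  · have e : X * mpow (cfc (fun x : ℝ => x ^ (1 / p) + ε) X) (1 - p) =
        cfc (fun x : ℝ => x * (x ^ (1 / p) + ε) ^ (1 - p)) X := by
      rw [cfc_mul (fun x => x) _ X (continuousOn_spectrum _ _) (continuousOn_spectrum _ _),
        cfc_id' ℝ X, mpow, ← cfc_comp' (fun x : ℝ => x ^ (1 - p)) _ X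
          ((X.finite_real_spectrum.image _).continuousOn _) (continuousOn_spectrum _ _)]
    rw [e, mpow, trRe_cfc hX.1, trRe_cfc hX.1, trRe_cfc hX.1, Finset.mul_sum, Finset.mul_sum,
      ← Finset.sum_add_distrib]
    have : (n : ℝ) * ε = ∑ _i : Fin n, ε := by simp
    rw [this, ← Finset.sum_add_distrib]
    refine Finset.sum_le_sum fun i _ => ?_
    have hx := hX.eigenvalues_nonneg i
    generalize hX.1.eigenvalues i = x at hx
    have h : x * (x ^ (1 / p) + ε) ^ (1 - p) ≤ x ^ (1 / p) := by
      rcases hx.eq_or_lt with rfl | hx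
      · rw [zero_mul]
        exact Real.rpow_nonneg le_rfl _
      · calc x * (x ^ (1 / p) + ε) ^ (1 - p) ≤ x * (x ^ (1 / p)) ^ (1 - p) := by
              gcongr x * ?_
              exact Real.rpow_le_rpow_of_nonpos (Real.rpow_pos_of_pos hx _) (by linarith)
                (by linarith)
          _ = x ^ (1 / p) := by
              rw [← Real.rpow_mul hx.le]
              nth_rewrite 1 [← Real.rpow_one x]
              rw [← Real.rpow_add hx]
              congr 1
              field_simp
              ring
    nlinarith [mul_le_mul_of_nonneg_left h (by positivity : 0 ≤ 1 / p),
      mul_nonneg (by positivity : 0 ≤ 1 / p) hε.le]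

end TracePowers

section Main

variable {m n k : ℕ}

/-- The matrix `1 - ∑ⱼ Hⱼ* Hⱼ + p L + ∑ⱼ Hⱼ* Aⱼ ^ p Hⱼ`. -/
noncomputable def powerSum (p : ℝ) (H : Fin k → Matrix (Fin m) (Fin n) ℂ)
    (L : Matrix (Fin n) (Fin n) ℂ) (A : Fin k → Matrix (Fin m) (Fin m) ℂ) :
    Matrix (Fin n) (Fin n) ℂ :=
  (1 - ∑ j, (H j)ᴴ * H j + p • L) + ∑ j, (H j)ᴴ * mpow (A j) p * H j

theorem posSemidef_powerSum {p : ℝ} (hp : 0 ≤ p) {H : Fin k → Matrix (Fin m) (Fin n) ℂ}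
    (hH : (1 - ∑ j, (H j)ᴴ * H j).PosSemidef) {L : Matrix (Fin n) (Fin n) ℂ} (hL : L.PosSemidef)
    {A : Fin k → Matrix (Fin m) (Fin m) ℂ} (hA : ∀ j, (A j).PosDef) :
    (powerSum p H L A).PosSemidef := by
  refine (hH.add (hL.smul hp)).add (posSemidef_sum _ fun j _ => ?_)
  refine PosSemidef.conjTranspose_mul_mul_same (posSemidef_cfc fun x hx => ?_) _
  exact Real.rpow_nonneg (nonneg_of_mem_spectrum (hA j).posSemidef hx) _

theorem mlogq_eq {q : ℝ} {A : Matrix (Fin m) (Fin m) ℂ} (hA : A.IsHermitian) :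
    mlogq q A = (q - 1)⁻¹ • (mpow A (q - 1) - 1) := by
  have hA' : IsSelfAdjoint A := hA
  have h : logq q = fun x => (q - 1)⁻¹ * (x ^ (q - 1) - 1) := by
    ext x
    rw [logq, div_eq_inv_mul]
  rw [mlogq, mpow, h, cfc_const_mul _ _ _ (continuousOn_spectrum _ _),
    cfc_sub _ _ _ (continuousOn_spectrum _ _) (continuousOn_spectrum _ _), cfc_const_one ℝ A]

theorem phim_eq {q : ℝ} (hq : 1 < q) (H : Fin k → Matrix (Fin m) (Fin n) ℂ)
    {L : Matrix (Fin n) (Fin n) ℂ} (hL : L.IsHermitian) {A : Fin k → Matrix (Fin m) (Fin m) ℂ}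
    (hA : ∀ j, (A j).IsHermitian) :
    phim q H L A = trRe (mpow (powerSum (q - 1) H L A) (1 / (q - 1))) := by
  have hq0 : q - 1 ≠ 0 := by linarith
  set M := L + ∑ j, (H j)ᴴ * mlogq q (A j) * H j with hM
  have hMs : IsSelfAdjoint M := by
    refine hL.add (isSelfAdjoint_sum _ fun j _ => ?_)
    exact isHermitian_conjTranspose_mul_mul _ (cfc_predicate (logq q) (A j) : IsSelfAdjoint _)
  have h : powerSum (q - 1) H L A = cfc (fun x => 1 + (q - 1) * x) M := by
    rw [cfc_const_add 1 (fun x => (q - 1) * x) M (continuousOn_spectrum _ _) hMs,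
      cfc_const_mul _ _ _ (continuousOn_spectrum _ _), cfc_id' ℝ M, map_one, hM, powerSum]
    simp only [mlogq_eq (hA _), smul_add, Finset.smul_sum, Matrix.mul_smul, Matrix.smul_mul,
      smul_smul, mul_inv_cancel₀ hq0, one_smul, Matrix.mul_sub, Matrix.sub_mul, Matrix.mul_one,
      Finset.sum_sub_distrib]
    abel
  rw [h, mpow, ← cfc_comp' (fun x : ℝ => x ^ (1 / (q - 1))) _ M
    ((M.finite_real_spectrum.image _).continuousOn _) (continuousOn_spectrum _ _), phim, mexpq]
  congr 2
  ext x
  rw [expq, if_neg hq.ne']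

theorem trRe_powerSum_mul_mpow_convex {p s t : ℝ} (hp : p ∈ Set.Icc (1 : ℝ) 2)
    {H : Fin k → Matrix (Fin m) (Fin n) ℂ}
    (hH : (1 - ∑ j, (H j)ᴴ * H j).PosSemidef) {L : Matrix (Fin n) (Fin n) ℂ} (hL : L.PosSemidef)
    {A B : Fin k → Matrix (Fin m) (Fin m) ℂ} (hA : ∀ j, (A j).PosDef) (hB : ∀ j, (B j).PosDef)
    {Y Z : Matrix (Fin n) (Fin n) ℂ} (hY : Y.PosDef) (hZ : Z.PosDef)
    (hs : 0 ≤ s) (ht : 0 ≤ t) (hst : s + t = 1) (hAB : ∀ j, (s • A j + t • B j).PosDef)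
    (hYZ : (s • Y + t • Z).PosDef) :
    trRe (powerSum p H L (fun j => s • A j + t • B j) * mpow (s • Y + t • Z) (1 - p)) ≤
      s * trRe (powerSum p H L A * mpow Y (1 - p)) +
        t * trRe (powerSum p H L B * mpow Z (1 - p)) := by
  have hp0 : 0 ≤ p := by linarith [hp.1]
  obtain ⟨S, hS⟩ : ∃ S : Matrix (Fin n) (Fin n) ℂ,
      1 - ∑ j, (H j)ᴴ * H j + p • L = Sᴴ * S := by
    open scoped MatrixOrder in
    exact CStarAlgebra.nonneg_iff_eq_star_mul_self.1 (hH.add (hL.smul hp0)).nonneg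
  have expand : ∀ (A : Fin k → Matrix (Fin m) (Fin m) ℂ) (W : Matrix (Fin n) (Fin n) ℂ),
      trRe (powerSum p H L A * W) =
        trRe (Sᴴ * mpow 1 p * S * W) + ∑ j, trRe ((H j)ᴴ * mpow (A j) p * H j * W) := by
    intro A W
    have h1 : mpow (1 : Matrix (Fin n) (Fin n) ℂ) p = 1 := by
      rw [mpow, cfc_apply_one, Real.one_rpow, map_one]
    rw [powerSum, hS, Matrix.add_mul, Finset.sum_mul, trRe_add, trRe_sum, h1, Matrix.mul_one]
  have hone : s • (1 : Matrix (Fin n) (Fin n) ℂ) + t • (1 : Matrix (Fin n) (Fin n) ℂ) = 1 := by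
    rw [← add_smul, hst, one_smul]
  have hconst := trRe_conjTranspose_mul_mpow_convex PosDef.one PosDef.one hY hZ hp hs ht
    (by rw [hone]; exact PosDef.one) hYZ S
  rw [hone] at hconst
  have hsum := Finset.sum_le_sum fun j (_ : j ∈ Finset.univ) =>
    trRe_conjTranspose_mul_mpow_convex (hA j) (hB j) hY hZ hp hs ht (hAB j) hYZ (H j)
  rw [Finset.sum_add_distrib, ← Finset.mul_sum, ← Finset.mul_sum] at hsum
  simp only [expand]
  linarith

end Main

/-- Joint convexity of φ for q ∈ [2,3], Σⱼ Hⱼ*Hⱼ ≤ I and L positive semidefinite. -/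
theorem stmt11 {m n k : ℕ} (q : ℝ) (hq : q ∈ Set.Icc (2 : ℝ) 3)
    (H : Fin k → Matrix (Fin m) (Fin n) ℂ)
    (hH : (1 - ∑ j, (H j)ᴴ * H j).PosSemidef)
    (L : Matrix (Fin n) (Fin n) ℂ) (hL : L.PosSemidef)
    (A B : Fin k → Matrix (Fin m) (Fin m) ℂ)
    (hA : ∀ j, (A j).PosDef) (hB : ∀ j, (B j).PosDef)
    (t : ℝ) (ht : t ∈ Set.Icc (0 : ℝ) 1) :
    phim q H L (fun j => t • A j + (1 - t) • B j)
      ≤ t * phim q H L A + (1 - t) * phim q H L B := by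
  have hp : q - 1 ∈ Set.Icc (1 : ℝ) 2 := ⟨by linarith [hq.1], by linarith [hq.2]⟩
  have hp0 : 0 < q - 1 := by linarith [hp.1]
  have ht0 : 0 ≤ t := ht.1
  have ht1 : 0 ≤ 1 - t := by linarith [ht.2]
  have posDef_combination : ∀ {d : ℕ} {X Y : Matrix (Fin d) (Fin d) ℂ}, X.PosDef → Y.PosDef →
      (t • X + (1 - t) • Y).PosDef := by
    intro d X Y hX hY
    rcases ht0.eq_or_lt with h | h
    · rw [← h]
      simpa using hY
    · exact (hX.smul h).add_posSemidef (hY.posSemidef.smul ht1)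
  have hAB := fun j => posDef_combination (hA j) (hB j)
  rw [phim_eq (by linarith) H hL.1 fun j => (hAB j).1,
    phim_eq (by linarith) H hL.1 fun j => (hA j).1,
    phim_eq (by linarith) H hL.1 fun j => (hB j).1]
  refine le_of_forall_pos_le_add fun δ hδ => ?_
  have hε : 0 < δ / (n + 1) := by positivity
  have hnε : n * (δ / (n + 1)) ≤ δ := by
    rw [mul_div_assoc', div_le_iff₀ (by positivity)]
    linarith
  obtain ⟨Y, hY, hYle⟩ := exists_trRe_mpow_le hp.1 hε (posSemidef_powerSum hp0.le hH hL hA)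
  obtain ⟨Z, hZ, hZle⟩ := exists_trRe_mpow_le hp.1 hε (posSemidef_powerSum hp0.le hH hL hB)
  have hYZ := posDef_combination hY hZ
  have hupper := trRe_mpow_one_div_le hp.1 (posSemidef_powerSum hp0.le hH hL hAB) hYZ
  have hconv := mul_le_mul_of_nonneg_left
    (trRe_powerSum_mul_mpow_convex hp hH hL hA hB hY hZ ht0 ht1 (by ring) hAB hYZ)
    (by positivity : 0 ≤ 1 / (q - 1))
  rw [trRe_add, trRe_smul, trRe_smul] at hupper
  linarith [mul_le_mul_of_nonneg_left hYle ht0, mul_le_mul_of_nonneg_left hZle ht1]
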